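/- Let E = EuclideanSpace ℝ (Fin n), ε > 0, S ⊆ E a finite set, and ℓ : E → Bool a binary labeling such that any two points of S with different labels are more than 2ε apart: for all p, q ∈ S with ℓ(p) ≠ ℓ(q), ‖p − q‖ > 2ε. Then there exists g : E → ℝ such that g is Lipschitz on E with constant 1/ε, and for every p ∈ S: 0 < g(p) ↔ ℓ(p) = true, and |g(p)| ≥ 1. (The constructive core of the proof of Theorem 3: from 2ε-separated labeled data one builds a globally (1/ε)-Lipschitz function whose sign matches the labels and whose magnitude on the data is at least 1, hence at least ε times its global Lipschitz constant.) -/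

import Mathlib

/-!
Read the labels as the real values `±1`. Two such values differ by at most `2`, and they differ only
at points of `S` that are at least `2 * ε` apart, so the signed labels are `1 / ε`-Lipschitz on `S`.
McShane's extension theorem then extends them to the whole space with the same constant, in place of
an explicit construction from Voronoi cells.
-/

open scoped NNReal

theorem lipschitzOnWith_of_le_dist_of_ne {X Y : Type*} [PseudoMetricSpace X] [PseudoMetricSpace Y]
    {f : X → Y} {S : Set X} {C r : ℝ≥0} (hr : 0 < r)
    (hf : ∀ p ∈ S, ∀ q ∈ S, dist (f p) (f q) ≤ C)
    (hsep : ∀ p ∈ S, ∀ q ∈ S, f p ≠ f q → r ≤ dist p q) :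
    LipschitzOnWith (C / r) f S := by
  refine LipschitzOnWith.of_dist_le_mul fun p hp q hq => ?_
  by_cases hpq : f p = f q
  · rw [hpq, dist_self]
    positivity
  · calc
      dist (f p) (f q) ≤ C := hf p hp q hq
      _ = ↑(C / r) * (r : ℝ) := mod_cast (div_mul_cancel₀ C hr.ne').symm
      _ ≤ ↑(C / r) * dist p q := by gcongr; exact hsep p hp q hq hpq

/-- The real encoding of a binary label by a sign, `true` as `1` and `false` as `-1`, which turns a
labeling into a real function to be extended. -/
def labelSign (b : Bool) : ℝ := if b then 1 else -1

theorem labelSign_pos_iff {b : Bool} : 0 < labelSign b ↔ b = true := by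
  cases b <;> norm_num [labelSign]

theorem abs_labelSign (b : Bool) : |labelSign b| = 1 := by
  cases b <;> simp [labelSign]

theorem dist_labelSign_le_two (a b : Bool) : dist (labelSign a) (labelSign b) ≤ 2 := by
  calc
    dist (labelSign a) (labelSign b) ≤ |labelSign a| + |labelSign b| := abs_sub _ _
    _ = 2 := by rw [abs_labelSign, abs_labelSign, one_add_one_eq_two]

section SeparatedLabels

variable {X : Type*} [PseudoMetricSpace X] {S : Set X} {ℓ : X → Bool}

theorem lipschitzOnWith_labelSign_comp {ε : ℝ≥0} (hε : 0 < ε)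
    (hsep : ∀ p ∈ S, ∀ q ∈ S, ℓ p ≠ ℓ q → 2 * ε ≤ dist p q) :
    LipschitzOnWith (1 / ε) (labelSign ∘ ℓ) S := by
  have hK : 2 / (2 * ε) = 1 / ε := by field_simp
  rw [← hK]
  refine lipschitzOnWith_of_le_dist_of_ne (by positivity)
    (fun p _ q _ => dist_labelSign_le_two (ℓ p) (ℓ q)) fun p hp q hq hpq => ?_
  exact_mod_cast hsep p hp q hq (ne_of_apply_ne labelSign hpq)

theorem voronoi_construction_binary_general {ε : ℝ} (hε : 0 < ε)
    (hsep : ∀ p ∈ S, ∀ q ∈ S, ℓ p ≠ ℓ q → 2 * ε ≤ dist p q) :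
    ∃ g : X → ℝ, (∀ x₁ x₂ : X, |g x₁ - g x₂| ≤ (1 / ε) * dist x₁ x₂) ∧
      ∀ p ∈ S, (0 < g p ↔ ℓ p = true) ∧ 1 ≤ |g p| := by
  lift ε to ℝ≥0 using hε.le
  obtain ⟨g, hg, hgS⟩ := (lipschitzOnWith_labelSign_comp (mod_cast hε) hsep).extend_real
  refine ⟨g, fun x₁ x₂ => by simpa [Real.dist_eq] using hg.dist_le_mul x₁ x₂, fun p hp => ?_⟩
  rw [← hgS hp]
  exact ⟨labelSign_pos_iff, (abs_labelSign (ℓ p)).ge⟩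

end SeparatedLabels

theorem voronoi_construction_binary
    {n : ℕ} (ε : ℝ) (hε : 0 < ε)
    (S : Set (EuclideanSpace ℝ (Fin n))) (hS : S.Finite)
    (ℓ : EuclideanSpace ℝ (Fin n) → Bool)
    (hsep : ∀ p ∈ S, ∀ q ∈ S, ℓ p ≠ ℓ q → ‖p - q‖ > 2 * ε) :
    ∃ g : EuclideanSpace ℝ (Fin n) → ℝ,
      (∀ x₁ x₂ : EuclideanSpace ℝ (Fin n), |g x₁ - g x₂| ≤ (1 / ε) * ‖x₁ - x₂‖) ∧
      ∀ p ∈ S, (0 < g p ↔ ℓ p = true) ∧ 1 ≤ |g p| := by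
  simp only [← dist_eq_norm] at hsep ⊢
  exact voronoi_construction_binary_general hε fun p hp q hq hpq => (hsep p hp q hq hpq).le
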